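/- Let H be a k-Hopf algebra with antipode S, A a left H-comodule algebra, and φ : H → A a left H-colinear map. Suppose that either (1) S² = id_H, φ(H) ⊆ Z(A), and φ(hk) = φ(kh) for all h,k∈H, or (2) S is bijective and φ(h) ∈ k·1_A for all h∈H. Then γ^φ(h)(g) = φ(h·S(g)) defines an A-integral for the Doi-Hopf datum (H,A,H), which is total whenever φ(1_H) = 1_A. -/

import Mathlib

/-!
Write `γ(h)(g) = φ(h S(g))`. Three observations give the theorem.

* Condition (a): `S` is anti-multiplicative, so `γ(c h₁)(d h₂) = φ(c h₁ S(h₂) S(d)) = ε(h) γ(c)(d)`.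
  Summing over the iterated coaction of `a` leaves `a · γ(c)(d)`, which is `γ(c)(d) · a` because
  `φ` has central values in both cases. This is `lift_hopfGamma_act2_comul`.
* Condition (b): by colinearity its right-hand side is `Σ (d₂ ⊗ 1) · (id ⊗ φ)(Δ(c) Δ(S d₁))`.
  If `φ` is scalar-valued, `ρ(φ h) = 1 ⊗ φ h` commutes with `d₂ ⊗ 1`, and the claim reduces to
  `Σ Δ(S d₁)(d₂ ⊗ 1) = 1 ⊗ S d`. If `φ` is trace-like, then `φ(c S(d₁)) = φ(S(d₁) c)`, and after one
  more use of the trace property the claim reduces to `Σ (d₂ ⊗ 1)Δ(S d₁) = 1 ⊗ S d`.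
* Totality: `Σ φ(c₁ S(c₂)) = ε(c) φ(1)`.

Both identities in (b) come from the convolution monoid `Hom(H, B)`, with `B = H ⊗ H` or
`B = (H ⊗ H)ᵐᵒᵖ`: writing `i₁, i₂` for the two inclusions `H → H ⊗ H`, one has `Δ = i₁ * i₂`,
`(Δ ∘ S) * Δ = 1` and `i₂ * (i₂ ∘ S) = 1`, whence `(Δ ∘ S) * i₁ = i₂ ∘ S`. In the opposite
algebra the last two relations say that `S` is an antipode for the opposite multiplication,
which is where `S² = id` is used.
-/

open TensorProduct

noncomputable section

/-- A Doi-Hopf datum `(H, A, C)`: `H` is a `k`-bialgebra, `A` is a left `H`-comodule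
algebra (with coaction `ρ`), and `C` is a right `H`-module coalgebra (with action `act`). -/
structure DoiHopfDatum (k H A C : Type*) [CommRing k] [Ring H] [Bialgebra k H]
    [Ring A] [Algebra k A] [AddCommGroup C] [Module k C] [Coalgebra k C] where
  /-- the coaction `ρ_A : A → H ⊗ A`, `ρ a = Σ a_{<-1>} ⊗ a_{<0>}` -/
  ρ : A →ₗ[k] H ⊗[k] A
  ρ_coassoc : ∀ a : A,
    (TensorProduct.assoc k H H A)
        ((TensorProduct.map (Coalgebra.comul (R := k)) LinearMap.id) (ρ a))
      = (TensorProduct.map LinearMap.id ρ) (ρ a)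
  ρ_counit : ∀ a : A,
    (TensorProduct.lid k A)
        ((TensorProduct.map (Coalgebra.counit (R := k)) LinearMap.id) (ρ a)) = a
  ρ_mul : ∀ a b : A, ρ (a * b) = ρ a * ρ b
  ρ_one : ρ 1 = 1
  /-- the right `H`-action on `C`, written `act c h = c · h` -/
  act : C →ₗ[k] H →ₗ[k] C
  act_one : ∀ c : C, act c 1 = c
  act_mul : ∀ (c : C) (g h : H), act (act c g) h = act c (g * h)
  comul_act : ∀ (c : C) (h : H),
    Coalgebra.comul (R := k) (act c h)
      = (TensorProduct.map (TensorProduct.lift act) (TensorProduct.lift act))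
          ((TensorProduct.tensorTensorTensorComm k C C H H)
            (Coalgebra.comul (R := k) c ⊗ₜ[k] Coalgebra.comul (R := k) h))
  counit_act : ∀ (c : C) (h : H),
    Coalgebra.counit (R := k) (act c h)
      = Coalgebra.counit (R := k) c * Coalgebra.counit (R := k) h

namespace DoiHopfDatum

variable {k H A C : Type*} [CommRing k] [Ring H] [Bialgebra k H]
    [Ring A] [Algebra k A] [AddCommGroup C] [Module k C] [Coalgebra k C]
variable (D : DoiHopfDatum k H A C)

/-- The action `C ⊗ H → C` as a linear map on the tensor product. -/
def actL : C ⊗[k] H →ₗ[k] C := TensorProduct.lift D.act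

/-- The iterated coaction `a ↦ Σ (a_{<-2>} ⊗ a_{<-1>}) ⊗ a_{<0>}`. -/
def ρ2 : A →ₗ[k] (H ⊗[k] H) ⊗[k] A :=
  (TensorProduct.assoc k H H A).symm.toLinearMap ∘ₗ
    (TensorProduct.map LinearMap.id D.ρ) ∘ₗ D.ρ

/-- The simultaneous action of `H ⊗ H` on `C ⊗ C`. -/
def act2 : (C ⊗[k] C) ⊗[k] (H ⊗[k] H) →ₗ[k] C ⊗[k] C :=
  (TensorProduct.map D.actL D.actL) ∘ₗ
    (TensorProduct.tensorTensorTensorComm k C C H H).toLinearMap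

/-- The right `A`-action on `C ⊗ A`: `(c ⊗ b) · a = Σ c·a_{<-1>} ⊗ b·a_{<0>}`. -/
def rActCA : (C ⊗[k] A) ⊗[k] A →ₗ[k] C ⊗[k] A :=
  (TensorProduct.map D.actL (LinearMap.mul' k A)) ∘ₗ
    (TensorProduct.tensorTensorTensorComm k C A H A).toLinearMap ∘ₗ
    (TensorProduct.map LinearMap.id D.ρ)

/-- The right-hand side of condition (a) of `V₃`:
`(c ⊗ d) ⊗ a ↦ Σ a_{<0>} * θ(c·a_{<-2>} ⊗ d·a_{<-1>})`. -/
def V3aRHS (θ : C ⊗[k] C →ₗ[k] A) : (C ⊗[k] C) ⊗[k] A →ₗ[k] A :=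
  (LinearMap.mul' k A) ∘ₗ (TensorProduct.comm k A A).toLinearMap ∘ₗ
    (TensorProduct.map θ LinearMap.id) ∘ₗ
    (TensorProduct.map D.act2 LinearMap.id) ∘ₗ
    (TensorProduct.assoc k (C ⊗[k] C) (H ⊗[k] H) A).symm.toLinearMap ∘ₗ
    (TensorProduct.map LinearMap.id D.ρ2)

/-- The left-hand side of condition (b) of `V₃`: `c ⊗ d ↦ Σ c_(1) ⊗ θ(c_(2) ⊗ d)`. -/
def V3bLHS (_D : DoiHopfDatum k H A C) (θ : C ⊗[k] C →ₗ[k] A) : C ⊗[k] C →ₗ[k] C ⊗[k] A :=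
  (TensorProduct.map LinearMap.id θ) ∘ₗ
    (TensorProduct.assoc k C C C).toLinearMap ∘ₗ
    (TensorProduct.map (Coalgebra.comul (R := k)) LinearMap.id)

/-- The right-hand side of condition (b) of `V₃`:
`c ⊗ d ↦ Σ d_(2)·θ(c ⊗ d_(1))_{<-1>} ⊗ θ(c ⊗ d_(1))_{<0>}`. -/
def V3bRHS (θ : C ⊗[k] C →ₗ[k] A) : C ⊗[k] C →ₗ[k] C ⊗[k] A :=
  (TensorProduct.map D.actL LinearMap.id) ∘ₗ
    (TensorProduct.assoc k C H A).symm.toLinearMap ∘ₗ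
    (TensorProduct.comm k (H ⊗[k] A) C).toLinearMap ∘ₗ
    (TensorProduct.map D.ρ LinearMap.id) ∘ₗ
    (TensorProduct.map θ LinearMap.id) ∘ₗ
    (TensorProduct.assoc k C C C).symm.toLinearMap ∘ₗ
    (TensorProduct.map LinearMap.id (Coalgebra.comul (R := k)))

/-- `θ : C ⊗ C → A` belongs to `V₃`. -/
def IsV3 (θ : C ⊗[k] C →ₗ[k] A) : Prop :=
  (∀ (c d : C) (a : A), θ (c ⊗ₜ[k] d) * a = D.V3aRHS θ ((c ⊗ₜ[k] d) ⊗ₜ[k] a)) ∧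
    D.V3bLHS θ = D.V3bRHS θ

/-- `θ` is normalized: `Σ θ(c_(1) ⊗ c_(2)) = ε(c)1_A`. -/
def IsNormalizedV3 (_D : DoiHopfDatum k H A C) (θ : C ⊗[k] C →ₗ[k] A) : Prop :=
  ∀ c : C, θ (Coalgebra.comul (R := k) c)
    = algebraMap k A (Coalgebra.counit (R := k) c)

/-- An `A`-integral `γ : C → Hom(C,A)` for the Doi-Hopf datum: its uncurried form
lies in `V₃`. -/
def IsAIntegral (γ : C →ₗ[k] (C →ₗ[k] A)) : Prop :=
  D.IsV3 (TensorProduct.lift γ)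

/-- A total `A`-integral: a normalized `A`-integral. -/
def IsTotalAIntegral (γ : C →ₗ[k] (C →ₗ[k] A)) : Prop :=
  D.IsAIntegral γ ∧ D.IsNormalizedV3 (TensorProduct.lift γ)

end DoiHopfDatum

/-- A right-left Doi-Hopf module over the Doi-Hopf datum `D`: a right `A`-module and
left `C`-comodule `M` satisfying `ρ_M(m·a) = Σ m_{<-1>}·a_{<-1>} ⊗ m_{<0>}·a_{<0>}`. -/
structure DHModule {k H A C : Type*} [CommRing k] [Ring H] [Bialgebra k H]
    [Ring A] [Algebra k A] [AddCommGroup C] [Module k C] [Coalgebra k C]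
    (D : DoiHopfDatum k H A C) (M : Type*) [AddCommGroup M] [Module k M] where
  /-- the right `A`-action on `M` -/
  sm : M →ₗ[k] A →ₗ[k] M
  sm_one : ∀ m : M, sm m 1 = m
  sm_mul : ∀ (m : M) (a b : A), sm (sm m a) b = sm m (a * b)
  /-- the left `C`-coaction `ρ_M : M → C ⊗ M` -/
  cρ : M →ₗ[k] C ⊗[k] M
  cρ_coassoc : ∀ m : M,
    (TensorProduct.assoc k C C M)
        ((TensorProduct.map (Coalgebra.comul (R := k)) LinearMap.id) (cρ m))
      = (TensorProduct.map LinearMap.id cρ) (cρ m)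
  cρ_counit : ∀ m : M,
    (TensorProduct.lid k M)
        ((TensorProduct.map (Coalgebra.counit (R := k)) LinearMap.id) (cρ m)) = m
  compat : ∀ (m : M) (a : A),
    cρ (sm m a)
      = (TensorProduct.map D.actL (TensorProduct.lift sm))
          ((TensorProduct.tensorTensorTensorComm k C M H A)
            (cρ m ⊗ₜ[k] D.ρ a))

namespace DoiHopfDatum

variable {k H A C : Type*} [CommRing k] [Ring H] [Bialgebra k H]
    [Ring A] [Algebra k A] [AddCommGroup C] [Module k C] [Coalgebra k C]
variable (D : DoiHopfDatum k H A C)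

/-- The natural transformation attached to `θ : C ⊗ C → A`:
`ν_M (c ⊗ m) = Σ m_{<0>} · θ(c ⊗ m_{<-1>})`. -/
def nuMap (θ : C ⊗[k] C →ₗ[k] A) {M : Type*} [AddCommGroup M] [Module k M]
    (DM : DHModule D M) : C ⊗[k] M →ₗ[k] M :=
  (TensorProduct.lift DM.sm) ∘ₗ (TensorProduct.comm k A M).toLinearMap ∘ₗ
    (TensorProduct.map θ LinearMap.id) ∘ₗ
    (TensorProduct.assoc k C C M).symm.toLinearMap ∘ₗ
    (TensorProduct.map LinearMap.id DM.cρ)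

/-- The right `A`-action on `C ⊗ M`: `(c ⊗ m) · a = Σ c·a_{<-1>} ⊗ m·a_{<0>}`. -/
def actCM {M : Type*} [AddCommGroup M] [Module k M] (DM : DHModule D M) :
    (C ⊗[k] M) ⊗[k] A →ₗ[k] C ⊗[k] M :=
  (TensorProduct.map D.actL (TensorProduct.lift DM.sm)) ∘ₗ
    (TensorProduct.tensorTensorTensorComm k C M H A).toLinearMap ∘ₗ
    (TensorProduct.map LinearMap.id D.ρ)

end DoiHopfDatum

section MulDatum

variable {k H A : Type*} [CommRing k] [Ring H] [Bialgebra k H] [Ring A] [Algebra k A]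

lemma mapMul_tensorTensorTensorComm (x y : H ⊗[k] H) :
    (TensorProduct.map (TensorProduct.lift (LinearMap.mul k H))
        (TensorProduct.lift (LinearMap.mul k H)))
      ((TensorProduct.tensorTensorTensorComm k H H H H) (x ⊗ₜ[k] y)) = x * y := by
  induction x using TensorProduct.induction_on with
  | zero => simp
  | tmul a b =>
    induction y using TensorProduct.induction_on with
    | zero => simp
    | tmul c d => simp [Algebra.TensorProduct.tmul_mul_tmul]
    | add y₁ y₂ h₁ h₂ => simp only [tmul_add, map_add, h₁, h₂, mul_add]
  | add x₁ x₂ h₁ h₂ => simp only [add_tmul, map_add, h₁, h₂, add_mul]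

/-- The Doi-Hopf datum `(H, A, H)`: `A` a left `H`-comodule algebra and `C = H` the
right `H`-module coalgebra given by multiplication. -/
def DoiHopfDatum.ofComodAlg (ρ : A →ₗ[k] H ⊗[k] A)
    (ρ_coassoc : ∀ a : A,
      (TensorProduct.assoc k H H A)
          ((TensorProduct.map (Coalgebra.comul (R := k)) LinearMap.id) (ρ a))
        = (TensorProduct.map LinearMap.id ρ) (ρ a))
    (ρ_counit : ∀ a : A,
      (TensorProduct.lid k A)
          ((TensorProduct.map (Coalgebra.counit (R := k)) LinearMap.id) (ρ a)) = a)
    (ρ_mul : ∀ a b : A, ρ (a * b) = ρ a * ρ b)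
    (ρ_one : ρ 1 = 1) : DoiHopfDatum k H A H where
  ρ := ρ
  ρ_coassoc := ρ_coassoc
  ρ_counit := ρ_counit
  ρ_mul := ρ_mul
  ρ_one := ρ_one
  act := LinearMap.mul k H
  act_one := fun c => mul_one c
  act_mul := fun c g h => mul_assoc c g h
  comul_act := fun c h => by
    rw [mapMul_tensorTensorTensorComm]
    simp
  counit_act := fun c h => by simp

end MulDatum

section HopfGamma

variable {k H A : Type*} [CommRing k] [Ring H] [HopfAlgebra k H] [Ring A] [Algebra k A]

/-- The map `γ^φ : H → Hom(H,A)` attached to `φ : H → A` by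
`γ^φ(h)(g) = φ(h·S(g))`, where `S` is the antipode. -/
def hopfGamma (φ : H →ₗ[k] A) : H →ₗ[k] (H →ₗ[k] A) :=
  TensorProduct.curry (φ ∘ₗ (LinearMap.mul' k H) ∘ₗ
    (TensorProduct.map LinearMap.id (HopfAlgebra.antipode (R := k))))

end HopfGamma

section Convolution

open HopfAlgebra WithConv MulOpposite

variable {k H : Type*} [CommRing k] [Ring H] [HopfAlgebra k H]

/-- `Σ Δ(S d₁)(d₂ ⊗ 1) = 1 ⊗ S d`. -/
lemma sum_comul_antipode_mul_tmul_one (d : H) :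
    LinearMap.mul' k (H ⊗[k] H)
      (TensorProduct.map (Coalgebra.comul ∘ₗ antipode k)
        (Algebra.TensorProduct.includeLeft (R := k) (S := k) (A := H) (B := H)).toLinearMap
        (Coalgebra.comul (R := k) d))
      = 1 ⊗ₜ[k] antipode k d := by
  set i₁ : H →ₐ[k] H ⊗[k] H := Algebra.TensorProduct.includeLeft with hi₁
  set i₂ : H →ₐ[k] H ⊗[k] H := Algebra.TensorProduct.includeRight with hi₂
  set Δ := Bialgebra.comulAlgHom k H with hΔ
  have h1 : toConv (Δ.toLinearMap ∘ₗ antipode k) * toConv Δ.toLinearMap = 1 := by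
    have := LinearMap.algHom_comp_convMul_distrib Δ (toConv (antipode k (A := H)))
      (toConv LinearMap.id)
    rw [LinearMap.antipode_mul_id] at this
    apply WithConv.ext
    refine Eq.trans this.symm ?_
    ext x
    simp
  have h2 : toConv i₁.toLinearMap * toConv i₂.toLinearMap = toConv Δ.toLinearMap := by
    ext x
    rw [LinearMap.convMul_apply]
    have : ∀ t : H ⊗[k] H,
        LinearMap.mul' k (H ⊗[k] H) (TensorProduct.map i₁.toLinearMap i₂.toLinearMap t) = t := by
      intro t
      induction t using TensorProduct.induction_on with
      | zero => simp
      | tmul a b => simp [hi₁, hi₂]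
      | add a b ha hb => simp only [map_add, ha, hb]
    exact this _
  have h3 : toConv i₂.toLinearMap * toConv (i₂.toLinearMap ∘ₗ antipode k) = 1 := by
    have := LinearMap.algHom_comp_convMul_distrib i₂ (toConv LinearMap.id)
      (toConv (antipode k (A := H)))
    rw [LinearMap.id_mul_antipode] at this
    apply WithConv.ext
    refine Eq.trans this.symm ?_
    ext x
    simp
  have h4 : toConv (Δ.toLinearMap ∘ₗ antipode k) * toConv i₁.toLinearMap
      = toConv (i₂.toLinearMap ∘ₗ antipode k) := by
    rw [← mul_one (_ * toConv i₁.toLinearMap), ← h3, mul_assoc, ← mul_assoc (toConv i₁.toLinearMap),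
      h2, ← mul_assoc, h1, one_mul]
  exact congrArg (fun f => f.ofConv d) h4

/-- If `S² = id` then `Σ (d₂ ⊗ 1)Δ(S d₁) = 1 ⊗ S d`. -/
lemma sum_tmul_one_mul_comul_antipode (hS : ∀ h : H, antipode k (antipode k h) = h) (d : H) :
    LinearMap.mul' k (H ⊗[k] H)
      (TensorProduct.comm k _ _ (TensorProduct.map (Coalgebra.comul ∘ₗ antipode k)
        (Algebra.TensorProduct.includeLeft (R := k) (S := k) (A := H) (B := H)).toLinearMap
        (Coalgebra.comul (R := k) d)))
      = 1 ⊗ₜ[k] antipode k d := by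
  set i₁ : H →ₐ[k] H ⊗[k] H := Algebra.TensorProduct.includeLeft with hi₁
  set i₂ : H →ₐ[k] H ⊗[k] H := Algebra.TensorProduct.includeRight with hi₂
  set Δ := Bialgebra.comulAlgHom k H with hΔ
  let o : H →ₗ[k] Hᵐᵒᵖ := (opLinearEquiv k).toLinearMap
  let o₂ : H ⊗[k] H →ₗ[k] (H ⊗[k] H)ᵐᵒᵖ := (opLinearEquiv k).toLinearMap
  have mulOp : ∀ (f g : H →ₗ[k] H) (t : H ⊗[k] H),
      LinearMap.mul' k Hᵐᵒᵖ (TensorProduct.map (o ∘ₗ f) (o ∘ₗ g) t)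
        = op (LinearMap.mul' k H (TensorProduct.comm k H H (TensorProduct.map f g t))) := by
    intro f g t
    induction t using TensorProduct.induction_on with
    | zero => simp
    | tmul a b => simp [o]
    | add a b ha hb => simp only [map_add, ha, hb, op_add]
  have mulOp₂ : ∀ (f g : H →ₗ[k] H ⊗[k] H) (t : H ⊗[k] H),
      LinearMap.mul' k (H ⊗[k] H)ᵐᵒᵖ (TensorProduct.map (o₂ ∘ₗ f) (o₂ ∘ₗ g) t)
        = op (LinearMap.mul' k (H ⊗[k] H) (TensorProduct.comm k _ _ (TensorProduct.map f g t))) := by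
    intro f g t
    induction t using TensorProduct.induction_on with
    | zero => simp
    | tmul a b => simp [o₂]
    | add a b ha hb => simp only [map_add, ha, hb, op_add]
  have hS1 : ∀ t : H ⊗[k] H, LinearMap.mul' k H (TensorProduct.comm k H H
      (TensorProduct.map (antipode k) LinearMap.id t))
      = antipode k (LinearMap.mul' k H ((antipode k).lTensor H t)) := by
    intro t
    induction t using TensorProduct.induction_on with
    | zero => simp
    | tmul a b => simp [antipode_mul_antidistrib, hS]
    | add a b ha hb => simp only [map_add, ha, hb]
  have hS2 : ∀ t : H ⊗[k] H, LinearMap.mul' k H (TensorProduct.comm k H H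
      (TensorProduct.map LinearMap.id (antipode k) t))
      = antipode k (LinearMap.mul' k H ((antipode k).rTensor H t)) := by
    intro t
    induction t using TensorProduct.induction_on with
    | zero => simp
    | tmul a b => simp [antipode_mul_antidistrib, hS]
    | add a b ha hb => simp only [map_add, ha, hb]
  have antipode_algebraMap : ∀ r : k, antipode k (algebraMap k H r) = algebraMap k H r := by
    intro r
    rw [Algebra.algebraMap_eq_smul_one, map_smul, antipode_one]
  have e1 : toConv (o ∘ₗ antipode k) * toConv o = 1 := by
    ext x
    rw [LinearMap.convMul_apply]
    refine (mulOp (antipode k) LinearMap.id _).trans ?_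
    rw [hS1, mul_antipode_lTensor_comul_apply, antipode_algebraMap]
    rfl
  have e2 : toConv o * toConv (o ∘ₗ antipode k) = 1 := by
    ext x
    rw [LinearMap.convMul_apply]
    refine (mulOp LinearMap.id (antipode k) _).trans ?_
    rw [hS2, mul_antipode_rTensor_comul_apply, antipode_algebraMap]
    rfl
  have h1 : toConv (o₂ ∘ₗ Δ.toLinearMap ∘ₗ antipode k) * toConv (o₂ ∘ₗ Δ.toLinearMap) = 1 := by
    have := LinearMap.algHom_comp_convMul_distrib (AlgHom.op Δ) (toConv (o ∘ₗ antipode k))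
      (toConv o)
    rw [e1] at this
    apply WithConv.ext
    refine Eq.trans this.symm ?_
    ext x
    simp
  have h2 : toConv (o₂ ∘ₗ i₁.toLinearMap) * toConv (o₂ ∘ₗ i₂.toLinearMap)
      = toConv (o₂ ∘ₗ Δ.toLinearMap) := by
    ext x
    rw [LinearMap.convMul_apply]
    have : ∀ t : H ⊗[k] H,
        LinearMap.mul' k (H ⊗[k] H)
          (TensorProduct.comm k _ _ (TensorProduct.map i₁.toLinearMap i₂.toLinearMap t)) = t := by
      intro t
      induction t using TensorProduct.induction_on with
      | zero => simp
      | tmul a b => simp [hi₁, hi₂]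
      | add a b ha hb => simp only [map_add, ha, hb]
    exact (mulOp₂ _ _ _).trans (congrArg op (this _))
  have h3 : toConv (o₂ ∘ₗ i₂.toLinearMap) * toConv (o₂ ∘ₗ i₂.toLinearMap ∘ₗ antipode k) = 1 := by
    have := LinearMap.algHom_comp_convMul_distrib (AlgHom.op i₂) (toConv o)
      (toConv (o ∘ₗ antipode k))
    rw [e2] at this
    apply WithConv.ext
    refine Eq.trans this.symm ?_
    ext x
    simp
  have h4 : toConv (o₂ ∘ₗ Δ.toLinearMap ∘ₗ antipode k) * toConv (o₂ ∘ₗ i₁.toLinearMap)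
      = toConv (o₂ ∘ₗ i₂.toLinearMap ∘ₗ antipode k) := by
    rw [← mul_one (_ * toConv (o₂ ∘ₗ i₁.toLinearMap)), ← h3, mul_assoc,
      ← mul_assoc (toConv (o₂ ∘ₗ i₁.toLinearMap)), h2, ← mul_assoc, h1, one_mul]
  have h5 := congrArg (fun f => f.ofConv d) h4
  exact op_injective ((mulOp₂ _ _ _).symm.trans h5)

end Convolution

section HopfGammaLemmas

open HopfAlgebra

variable {k H A : Type*} [CommRing k] [Ring H] [HopfAlgebra k H] [Ring A] [Algebra k A]

lemma hopfGamma_apply (φ : H →ₗ[k] A) (c d : H) :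
    hopfGamma φ c d = φ (c * antipode k d) := by
  simp [hopfGamma]

lemma lift_hopfGamma_tmul (φ : H →ₗ[k] A) (c d : H) :
    TensorProduct.lift (hopfGamma φ) (c ⊗ₜ[k] d) = φ (c * antipode k d) := by
  simp [hopfGamma]

lemma lift_hopfGamma_comul (φ : H →ₗ[k] A) (c : H) :
    TensorProduct.lift (hopfGamma φ) (Coalgebra.comul (R := k) c)
      = Coalgebra.counit (R := k) c • φ 1 := by
  have : ∀ t : H ⊗[k] H, TensorProduct.lift (hopfGamma φ) t
      = φ (LinearMap.mul' k H ((antipode k).lTensor H t)) := by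
    intro t
    induction t using TensorProduct.induction_on with
    | zero => simp
    | tmul a b => simp [hopfGamma_apply]
    | add a b ha hb => simp only [map_add, ha, hb]
  rw [this, mul_antipode_lTensor_comul_apply, Algebra.algebraMap_eq_smul_one, map_smul]

/-- `Σ γ(c h₁)(d h₂) = ε(h) γ(c)(d)`, by anti-multiplicativity of the antipode. -/
lemma lift_hopfGamma_act2_comul (D : DoiHopfDatum k H A H) (hD : D.act = LinearMap.mul k H)
    (φ : H →ₗ[k] A) (c d h : H) :
    TensorProduct.lift (hopfGamma φ)
        (D.act2 ((c ⊗ₜ[k] d) ⊗ₜ[k] Coalgebra.comul (R := k) h))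
      = Coalgebra.counit (R := k) h • φ (c * antipode k d) := by
  have : ∀ t : H ⊗[k] H, TensorProduct.lift (hopfGamma φ) (D.act2 ((c ⊗ₜ[k] d) ⊗ₜ[k] t))
      = φ (c * LinearMap.mul' k H ((antipode k).lTensor H t) * antipode k d) := by
    intro t
    induction t using TensorProduct.induction_on with
    | zero => simp
    | tmul a b =>
      simp [DoiHopfDatum.act2, DoiHopfDatum.actL, hD, hopfGamma_apply,
        antipode_mul_antidistrib, mul_assoc]
    | add a b ha hb => simp only [map_add, ha, hb, tmul_add, mul_add, add_mul]
  rw [this, mul_antipode_lTensor_comul_apply, Algebra.algebraMap_eq_smul_one]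
  simp

/-- Condition (a) holds as soon as `φ` has central values. -/
lemma hopfGamma_V3a (D : DoiHopfDatum k H A H) (hD : D.act = LinearMap.mul k H)
    (φ : H →ₗ[k] A) (hc : ∀ h, φ h ∈ Set.center A) (c d : H) (a : A) :
    TensorProduct.lift (hopfGamma φ) (c ⊗ₜ[k] d) * a
      = D.V3aRHS (TensorProduct.lift (hopfGamma φ)) ((c ⊗ₜ[k] d) ⊗ₜ[k] a) := by
  have hρ2 : D.ρ2 a
      = TensorProduct.map (Coalgebra.comul (R := k)) LinearMap.id (D.ρ a) := by
    simp only [DoiHopfDatum.ρ2, LinearMap.comp_apply, LinearEquiv.coe_coe]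
    rw [← D.ρ_coassoc, LinearEquiv.symm_apply_apply]
  have key : ∀ t : H ⊗[k] A,
      (LinearMap.mul' k A) ((TensorProduct.comm k A A)
        ((TensorProduct.map (TensorProduct.lift (hopfGamma φ)) LinearMap.id)
          ((TensorProduct.map D.act2 LinearMap.id)
            ((TensorProduct.assoc k (H ⊗[k] H) (H ⊗[k] H) A).symm
              ((c ⊗ₜ[k] d) ⊗ₜ[k]
                (TensorProduct.map (Coalgebra.comul (R := k)) LinearMap.id t))))))
      = (TensorProduct.lid k A
          (TensorProduct.map (Coalgebra.counit (R := k)) LinearMap.id t))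
        * φ (c * antipode k d) := by
    intro t
    induction t using TensorProduct.induction_on with
    | zero => simp
    | tmul h b => simp [lift_hopfGamma_act2_comul D hD]
    | add a b ha hb => simp only [map_add, ha, hb, tmul_add, add_mul]
  have : D.V3aRHS (TensorProduct.lift (hopfGamma φ)) ((c ⊗ₜ[k] d) ⊗ₜ[k] a)
      = a * φ (c * antipode k d) := by
    simp only [DoiHopfDatum.V3aRHS, LinearMap.comp_apply, LinearEquiv.coe_coe,
      TensorProduct.map_tmul, LinearMap.id_apply, hρ2]
    rw [key, D.ρ_counit]
  rw [this, lift_hopfGamma_tmul]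
  exact ((hc _).comm a).eq

/-- The left-hand side of condition (b) is `(id ⊗ φ)(Δ(c)(1 ⊗ S d))`. -/
lemma hopfGamma_V3bLHS (D : DoiHopfDatum k H A H) (φ : H →ₗ[k] A) (c d : H) :
    D.V3bLHS (TensorProduct.lift (hopfGamma φ)) (c ⊗ₜ[k] d)
      = TensorProduct.map LinearMap.id φ
          (Coalgebra.comul (R := k) c * (1 ⊗ₜ[k] antipode k d)) := by
  simp only [DoiHopfDatum.V3bLHS, LinearMap.comp_apply, LinearEquiv.coe_coe,
    TensorProduct.map_tmul, LinearMap.id_apply]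
  induction (Coalgebra.comul (R := k) c) using TensorProduct.induction_on with
  | zero => simp
  | tmul a b => simp [hopfGamma_apply]
  | add a b ha hb => simp only [map_add, ha, hb, add_tmul, add_mul]

/-- To verify condition (b) it suffices to replace each term `(y ⊗ 1) · ρ(φ(c S(x)))` of its
right-hand side by `(id ⊗ φ)(F(x ⊗ y))`, for a linear `F = F c` such that `F(Δ d)` and
`Δ(c)(1 ⊗ S d)` agree after applying `id ⊗ φ`. -/
lemma hopfGamma_V3b_of (D : DoiHopfDatum k H A H) (hD : D.act = LinearMap.mul k H)
    (φ : H →ₗ[k] A) (F : H → H ⊗[k] H →ₗ[k] H ⊗[k] H)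
    (hF : ∀ c x y : H, (y ⊗ₜ[k] (1 : A)) * D.ρ (φ (c * antipode k x))
      = TensorProduct.map LinearMap.id φ (F c (x ⊗ₜ[k] y)))
    (hFd : ∀ c d : H, TensorProduct.map LinearMap.id φ (F c (Coalgebra.comul (R := k) d))
      = TensorProduct.map LinearMap.id φ
          (Coalgebra.comul (R := k) c * (1 ⊗ₜ[k] antipode k d))) :
    D.V3bLHS (TensorProduct.lift (hopfGamma φ)) = D.V3bRHS (TensorProduct.lift (hopfGamma φ)) := by
  ext c d
  simp only [TensorProduct.AlgebraTensorModule.curry_apply, TensorProduct.curry_apply,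
    LinearMap.coe_restrictScalars]
  rw [hopfGamma_V3bLHS, ← hFd]
  simp only [DoiHopfDatum.V3bRHS, LinearMap.comp_apply, LinearEquiv.coe_coe,
    TensorProduct.map_tmul, LinearMap.id_apply]
  induction (Coalgebra.comul (R := k) d) using TensorProduct.induction_on with
  | zero => simp
  | add a b ha hb => simp only [map_add, ha, hb, tmul_add]
  | tmul x y =>
    rw [← hF]
    simp only [TensorProduct.assoc_symm_tmul, TensorProduct.map_tmul, LinearMap.id_apply,
      lift_hopfGamma_tmul, TensorProduct.comm_tmul]
    induction (D.ρ (φ (c * antipode k x))) using TensorProduct.induction_on with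
    | zero => simp
    | add a b ha hb => simp only [map_add, ← ha, ← hb, tmul_add, mul_add]
    | tmul h a => simp [DoiHopfDatum.actL, hD]

lemma map_id_mul_tmul_one (φ : H →ₗ[k] A) (t : H ⊗[k] H) (y : H) :
    TensorProduct.map LinearMap.id φ (t * (y ⊗ₜ[k] 1))
      = TensorProduct.map LinearMap.id φ t * (y ⊗ₜ[k] 1) := by
  induction t using TensorProduct.induction_on with
  | zero => simp
  | tmul a b => simp
  | add a b ha hb => simp only [map_add, ha, hb, add_mul]

lemma map_id_tmul_one_mul (φ : H →ₗ[k] A) (t : H ⊗[k] H) (y : H) :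
    TensorProduct.map LinearMap.id φ ((y ⊗ₜ[k] 1) * t)
      = (y ⊗ₜ[k] 1) * TensorProduct.map LinearMap.id φ t := by
  induction t using TensorProduct.induction_on with
  | zero => simp
  | tmul a b => simp
  | add a b ha hb => simp only [map_add, ha, hb, mul_add]

/-- Condition (b) when `S² = id` and `φ` is trace-like. -/
lemma hopfGamma_V3b_of_trace (D : DoiHopfDatum k H A H) (hD : D.act = LinearMap.mul k H)
    (φ : H →ₗ[k] A)
    (hφ : ∀ h : H, D.ρ (φ h) = TensorProduct.map LinearMap.id φ (Coalgebra.comul (R := k) h))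
    (hS : ∀ h : H, antipode k (antipode k h) = h) (htr : ∀ h g : H, φ (h * g) = φ (g * h)) :
    D.V3bLHS (TensorProduct.lift (hopfGamma φ)) = D.V3bRHS (TensorProduct.lift (hopfGamma φ)) := by
  -- `F c (x ⊗ y) = (y ⊗ 1) Δ(S x) Δ(c)`
  refine hopfGamma_V3b_of D hD φ (fun c =>
    LinearMap.mulRight k (Coalgebra.comul (R := k) c) ∘ₗ LinearMap.mul' k (H ⊗[k] H) ∘ₗ
      (TensorProduct.comm k _ _).toLinearMap ∘ₗ
      TensorProduct.map (Coalgebra.comul ∘ₗ antipode k)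
        (Algebra.TensorProduct.includeLeft (R := k) (S := k) (A := H) (B := H)).toLinearMap)
    ?_ ?_
  · intro c x y
    rw [htr, hφ, ← map_id_tmul_one_mul]
    simp [mul_assoc]
  · intro c d
    simp only [LinearMap.comp_apply, LinearEquiv.coe_coe]
    rw [sum_tmul_one_mul_comul_antipode hS, LinearMap.mulRight_apply]
    induction (Coalgebra.comul (R := k) c) using TensorProduct.induction_on with
    | zero => simp
    | tmul a b => simp [htr b]
    | add a b ha hb => simp only [map_add, ha, hb, add_mul, mul_add]

/-- Condition (b) when `φ` is scalar-valued. -/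
lemma hopfGamma_V3b_of_scalar (D : DoiHopfDatum k H A H) (hD : D.act = LinearMap.mul k H)
    (φ : H →ₗ[k] A)
    (hφ : ∀ h : H, D.ρ (φ h) = TensorProduct.map LinearMap.id φ (Coalgebra.comul (R := k) h))
    (hsc : ∀ h : H, φ h ∈ Set.range (algebraMap k A)) :
    D.V3bLHS (TensorProduct.lift (hopfGamma φ)) = D.V3bRHS (TensorProduct.lift (hopfGamma φ)) := by
  -- `F c (x ⊗ y) = Δ(c) Δ(S x) (y ⊗ 1)`
  refine hopfGamma_V3b_of D hD φ (fun c =>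
    LinearMap.mulLeft k (Coalgebra.comul (R := k) c) ∘ₗ LinearMap.mul' k (H ⊗[k] H) ∘ₗ
      TensorProduct.map (Coalgebra.comul ∘ₗ antipode k)
        (Algebra.TensorProduct.includeLeft (R := k) (S := k) (A := H) (B := H)).toLinearMap)
    ?_ ?_
  · intro c x y
    have hcomm : ∀ h : H, (y ⊗ₜ[k] (1 : A)) * D.ρ (φ h) = D.ρ (φ h) * (y ⊗ₜ[k] (1 : A)) := by
      intro h
      obtain ⟨r, hr⟩ := hsc h
      rw [← hr, Algebra.algebraMap_eq_smul_one, map_smul, D.ρ_one]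
      simp
    rw [hcomm, hφ, ← map_id_mul_tmul_one]
    simp [mul_assoc]
  · intro c d
    simp only [LinearMap.comp_apply]
    rw [sum_comul_antipode_mul_tmul_one, LinearMap.mulLeft_apply]

end HopfGammaLemmas

/-- Doi: let `φ : H → A` be left `H`-colinear and suppose that either
(1) `S² = id`, `φ(H) ⊆ Z(A)` and `φ(hk) = φ(kh)` for all `h, k`, or
(2) `S` is bijective and `φ(h) ∈ k·1_A` for all `h`. Then `γ^φ(h)(g) = φ(h·S(g))`
is an `A`-integral for `(H,A,H)`, which is total whenever `φ(1_H) = 1_A`. -/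
theorem doi_conditions_give_integral
    {k H A : Type*} [CommRing k] [Ring H] [HopfAlgebra k H]
    [Ring A] [Algebra k A]
    (ρ : A →ₗ[k] H ⊗[k] A)
    (ρ_coassoc : ∀ a : A,
      (TensorProduct.assoc k H H A)
          ((TensorProduct.map (Coalgebra.comul (R := k)) LinearMap.id) (ρ a))
        = (TensorProduct.map LinearMap.id ρ) (ρ a))
    (ρ_counit : ∀ a : A,
      (TensorProduct.lid k A)
          ((TensorProduct.map (Coalgebra.counit (R := k)) LinearMap.id) (ρ a)) = a)
    (ρ_mul : ∀ a b : A, ρ (a * b) = ρ a * ρ b)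
    (ρ_one : ρ 1 = 1)
    (φ : H →ₗ[k] A)
    (hφ : ∀ h : H, ρ (φ h)
      = (TensorProduct.map LinearMap.id φ) (Coalgebra.comul (R := k) h))
    (hcond :
      ((∀ h : H, HopfAlgebra.antipode (R := k) (HopfAlgebra.antipode (R := k) h) = h) ∧
        (∀ h : H, φ h ∈ Set.center A) ∧
        (∀ h g : H, φ (h * g) = φ (g * h))) ∨
      (Function.Bijective (HopfAlgebra.antipode (R := k) (A := H)) ∧
        (∀ h : H, φ h ∈ Set.range (algebraMap k A)))) :
    (DoiHopfDatum.ofComodAlg ρ ρ_coassoc ρ_counit ρ_mul ρ_one).IsAIntegral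
        (hopfGamma φ) ∧
    (φ 1 = 1 →
      (DoiHopfDatum.ofComodAlg ρ ρ_coassoc ρ_counit ρ_mul ρ_one).IsNormalizedV3
        (TensorProduct.lift (hopfGamma φ))) := by
  have hcenter : ∀ h : H, φ h ∈ Set.center A := by
    rcases hcond with ⟨-, hc, -⟩ | ⟨-, hsc⟩
    · exact hc
    · intro h
      obtain ⟨r, hr⟩ := hsc h
      rw [← hr]
      exact Set.algebraMap_mem_center r
  refine ⟨⟨hopfGamma_V3a _ rfl φ hcenter, ?_⟩, fun h1 c => ?_⟩
  · rcases hcond with ⟨hS, -, htr⟩ | ⟨-, hsc⟩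
    · exact hopfGamma_V3b_of_trace _ rfl φ hφ hS htr
    · exact hopfGamma_V3b_of_scalar _ rfl φ hφ hsc
  · rw [lift_hopfGamma_comul, h1, Algebra.algebraMap_eq_smul_one]
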